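/- Let V be a finite-dimensional complex inner product space and A a finite set of linear subspaces of V. Suppose G ⊆ L(A)* \ {0} is a combinatorial building set of the poset L(A)* (ordered by inclusion), and suppose that for every U ∈ L(A)*, the sum of the dimensions of the factors of U (the maximal elements of G contained in U) equals the dimension of U. Then G is a geometric building set for A. -/

import Mathlib

attribute [local instance] Classical.propDecidable

universe u

/-- The set of maximal elements of `G` below `x`. -/
def maxBelow {L : Type u} [PartialOrder L] (G : Set L) (x : L) : Set L :=
  {g | g ∈ G ∧ g ≤ x ∧ ∀ h ∈ G, h ≤ x → g ≤ h → h = g}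

/-- The tuple in the product of lower intervals which is `g` in the coordinate
indexed by `g` and bottom elsewhere. -/
noncomputable def deltaTuple {L : Type u} [PartialOrder L] [OrderBot L] (G : Set L) (x : L)
    (g : maxBelow G x) : (h : maxBelow G x) → Set.Iic (h : L) :=
  fun h => if (h : L) = (g : L) then ⟨(h : L), le_refl _⟩ else ⟨⊥, bot_le⟩

/-- `G` is a (combinatorial) building set: `G` avoids the bottom element, and for every
`x ≠ ⊥` the interval `[⊥, x]` decomposes as the product of the intervals below the maximal
elements of `G` below `x`, via an isomorphism sending delta tuples to the corresponding
maximal elements. -/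
def IsBuilding {L : Type u} [PartialOrder L] [OrderBot L] (G : Set L) : Prop :=
  (∀ g ∈ G, g ≠ ⊥) ∧
  ∀ x : L, x ≠ ⊥ →
    ∃ φ : ((h : maxBelow G x) → Set.Iic (h : L)) ≃o Set.Iic x,
      ∀ g : maxBelow G x, ((φ (deltaTuple G x g) : Set.Iic x) : L) = (g : L)

noncomputable section

open Module

variable {V : Type} [NormedAddCommGroup V] [InnerProductSpace ℂ V] [FiniteDimensional ℂ V]

/-- `L(A)*`: the orthogonal complements of the intersections of subfamilies of `A`,
as a set of submodules (ordered by inclusion). -/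
def Lstar (A : Finset (Submodule ℂ V)) : Set (Submodule ℂ V) :=
  {W | ∃ S : Finset (Submodule ℂ V), S ⊆ A ∧ W = (S.inf id)ᗮ}

instance LstarOrderBot (A : Finset (Submodule ℂ V)) : OrderBot ↥(Lstar A) where
  bot := ⟨⊥, ∅, by simp, by simp⟩
  bot_le := fun w => show (⊥ : Submodule ℂ V) ≤ (w : Submodule ℂ V) from bot_le

/-- `D` is a decomposition of `U` in the sense of De Concini–Procesi: `D ⊆ L(A)*`,
`U` is the internal direct sum of `D`, and every `W ∈ L(A)*` with `W ≤ U` is the internal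
direct sum of the intersections `d ⊓ W`, each of which again lies in `L(A)*`. -/
def IsDecompositionOf (A : Finset (Submodule ℂ V)) (D : Set (Submodule ℂ V))
    (U : Submodule ℂ V) : Prop :=
  D ⊆ Lstar A ∧ sSupIndep D ∧ sSup D = U ∧
  ∀ W ∈ Lstar A, W ≤ U →
    (∀ d ∈ D, d ⊓ W ∈ Lstar A) ∧
    iSupIndep (fun d : D => (d : Submodule ℂ V) ⊓ W) ∧
    (⨆ d : D, (d : Submodule ℂ V) ⊓ W) = W

/-!
Let `Uⱼ` be the factors of `U`. An element of the product `∏ [0, Uⱼ] ≃ [0, U]` is the join of its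
coordinates, so every `W ≤ U` in `L(A)*` is a sum `⨆ Wⱼ` with `Wⱼ ∈ L(A)*` and `Wⱼ ≤ Uⱼ`. For
`W = U` this shows that the factors span `U`, and then the count of dimensions makes their sum
direct. Once it is direct, modularity of the lattice of subspaces forces `Wⱼ = Uⱼ ⊓ W`.
-/

section Lattice

variable {M ι : Type*} [CompleteLattice M]

/-- Decompositions in the sense of De Concini–Procesi, relative to a subset `L` of an arbitrary
complete lattice in place of `L(A)*` in the lattice of subspaces. The clauses are kept in the shape
of `IsDecompositionOf A D u`, so that it is definitionally the case `L = Lstar A`. -/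
def IsDecompositionIn (L D : Set M) (u : M) : Prop :=
  D ⊆ L ∧ sSupIndep D ∧ sSup D = u ∧
  ∀ w ∈ L, w ≤ u →
    (∀ d ∈ D, d ⊓ w ∈ L) ∧ iSupIndep (fun d : D => (d : M) ⊓ w) ∧ (⨆ d : D, (d : M) ⊓ w) = w

lemma inf_iSup_eq_of_iSupIndep [IsModularLattice M] {d v : ι → M} (hd : iSupIndep d)
    (hv : v ≤ d) (i : ι) : d i ⊓ ⨆ j, v j = v i := by
  refine le_antisymm ?_ (le_inf (hv i) (le_iSup v i))
  calc d i ⊓ ⨆ j, v j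
      = (v i ⊔ ⨆ (j) (_ : j ≠ i), v j) ⊓ d i := by rw [iSup_split_single v i, inf_comm]
    _ ≤ (v i ⊔ ⨆ (j) (_ : j ≠ i), d j) ⊓ d i := by gcongr with j; exact hv j
    _ = v i ⊔ (⨆ (j) (_ : j ≠ i), d j) ⊓ d i := sup_inf_assoc_of_le _ (hv i)
    _ = v i := by rw [(hd i).symm.eq_bot, sup_bot_eq]

lemma isDecompositionIn_range [IsModularLattice M] {L : Set M} {d : ι → M} (hdL : ∀ i, d i ∈ L)
    (hd : iSupIndep d)
    (hsplit : ∀ w ∈ L, w ≤ ⨆ i, d i → ∃ v : ι → M, (∀ i, v i ∈ L) ∧ v ≤ d ∧ ⨆ i, v i = w) :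
    IsDecompositionIn L (Set.range d) (⨆ i, d i) := by
  refine ⟨Set.range_subset_iff.2 hdL, hd.sSupIndep_range, rfl, fun w hw hwd => ?_⟩
  obtain ⟨v, hvL, hvd, rfl⟩ := hsplit w hw hwd
  have inf_eq : ∀ i, d i ⊓ ⨆ j, v j = v i := inf_iSup_eq_of_iSupIndep hd hvd
  refine ⟨Set.forall_mem_range.2 fun i => (inf_eq i).symm ▸ hvL i,
    ((sSupIndep_iff _).1 hd.sSupIndep_range).mono fun _ => inf_le_left, ?_⟩
  rw [iSup_range' (· ⊓ ⨆ j, v j)]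
  exact iSup_congr inf_eq

end Lattice

section Building

lemma isLUB_range_update_bot {ι : Type*} [DecidableEq ι] {α : ι → Type*} [∀ i, Preorder (α i)]
    [∀ i, OrderBot (α i)] (t : ∀ i, α i) :
    IsLUB (Set.range fun i => Function.update ⊥ i (t i)) t := by
  refine ⟨Set.forall_mem_range.2 fun i =>
    update_le_iff.2 ⟨le_rfl, fun _ _ => bot_le⟩, fun b hb i => ?_⟩
  simpa using hb (Set.mem_range_self i) i

lemma deltaTuple_eq_update {L : Type*} [PartialOrder L] [OrderBot L] (G : Set L) (x : L)
    (g : maxBelow G x) : deltaTuple G x g = Function.update ⊥ g ⊤ := by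
  funext h
  by_cases hgh : h = g
  · subst hgh
    simp only [deltaTuple, if_true, Function.update_self]
    rfl
  · simp only [deltaTuple, Subtype.coe_inj, hgh, if_false, ne_eq, not_false_eq_true,
      Function.update_of_ne]
    rfl

lemma IsBuilding.exists_isLUB_range {L : Type*} [PartialOrder L] [OrderBot L] {G : Set L}
    (hG : IsBuilding G) {x : L} (w : Set.Iic x) :
    ∃ v : maxBelow G x → Set.Iic x, (∀ g, (v g : L) ≤ g) ∧ IsLUB (Set.range v) w := by
  by_cases hx : x = ⊥
  · subst hx
    exact ⟨fun _ => w, fun _ => w.2.trans bot_le, Set.forall_mem_range.2 fun _ => le_rfl,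
      fun _ _ => w.2.trans bot_le⟩
  obtain ⟨φ, hφ⟩ := hG.2 x hx
  let t := φ.symm w
  refine ⟨fun g => φ (Function.update ⊥ g (t g)), fun g => ?_, ?_⟩
  · calc (φ (Function.update ⊥ g (t g)) : L)
        ≤ φ (Function.update ⊥ g ⊤) := φ.monotone (Function.update_mono le_top)
      _ = g := by rw [← deltaTuple_eq_update, hφ]
  · have hlub := φ.isLUB_image'.2 (isLUB_range_update_bot t)
    rwa [← Set.range_comp, φ.apply_symm_apply] at hlub

variable {M : Type*} [CompleteLattice M] {L : Set M} [OrderBot L] {G : Set L}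

lemma IsBuilding.exists_iSup_eq (hL : ∀ S ⊆ L, sSup S ∈ L) (hG : IsBuilding G) {x w : L}
    (hw : w ≤ x) :
    ∃ v : maxBelow G x → L, (∀ g, v g ≤ g) ∧ ⨆ g, (v g : M) = w := by
  obtain ⟨v, hvg, hlub⟩ := hG.exists_isLUB_range ⟨w, hw⟩
  refine ⟨fun g => v g, hvg, le_antisymm (iSup_le fun g => hlub.1 ⟨g, rfl⟩) ?_⟩
  let s : L := ⟨⨆ g, (v g : M), hL _ (Set.range_subset_iff.2 fun g => (v g : L).2)⟩
  have hsx : s ≤ x := iSup_le fun g => (v g).2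
  have hvs : ∀ g, v g ≤ ⟨s, hsx⟩ := le_iSup fun g => (v g : M)
  exact hlub.2 (Set.forall_mem_range.2 hvs)

lemma IsBuilding.iSup_maxBelow (hL : ∀ S ⊆ L, sSup S ∈ L) (hG : IsBuilding G) (x : L) :
    ⨆ g : maxBelow G x, (g : M) = x := by
  obtain ⟨v, hvg, hvx⟩ := hG.exists_iSup_eq hL le_rfl
  exact le_antisymm (iSup_le fun g => g.2.2.1) (hvx.ge.trans (iSup_mono hvg))

lemma IsBuilding.isDecompositionIn [IsModularLattice M] (hL : ∀ S ⊆ L, sSup S ∈ L)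
    (hG : IsBuilding G) {x : L} (hind : iSupIndep fun g : maxBelow G x => (g : M)) :
    IsDecompositionIn L (Subtype.val '' maxBelow G x) x := by
  rw [Set.image_eq_range, ← hG.iSup_maxBelow hL x]
  refine isDecompositionIn_range (fun g => g.1.2) hind fun w hw hwx => ?_
  obtain ⟨v, hvg, hvw⟩ :=
    hG.exists_iSup_eq hL (w := ⟨w, hw⟩) (hwx.trans_eq (hG.iSup_maxBelow hL x))
  exact ⟨fun g => v g, fun g => (v g).2, hvg, hvw⟩

end Building

section Dimension

variable {K E : Type*} [DivisionRing K] [AddCommGroup E] [Module K E]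

lemma iSupIndep_of_finrank_iSup_eq_sum {ι : Type*} [Fintype ι] {p : ι → Submodule K E}
    [∀ i, FiniteDimensional K (p i)]
    (hp : finrank K (⨆ i, p i : Submodule K E) = ∑ i, finrank K (p i)) : iSupIndep p := by
  apply iSupIndep_of_dfinsupp_lsum_injective
  set f := DFinsupp.lsum ℕ (M := fun i => p i) fun i => (p i).subtype
  have hdom : finrank K (Π₀ i, p i) = ∑ i, finrank K (p i) := finrank_directSum K fun i => p i
  have hrange : finrank K (LinearMap.range f) = finrank K (Π₀ i, p i) := by
    rw [hdom, ← hp, Submodule.iSup_eq_range_dfinsupp_lsum]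
  have hker : finrank K (LinearMap.ker f) = 0 := by
    have := f.finrank_range_add_finrank_ker
    omega
  exact LinearMap.ker_eq_bot.1 (Submodule.finrank_eq_zero.1 hker)

theorem combinatorial_building_is_geometric_general {L : Set (Submodule K E)} [OrderBot L]
    (hL : ∀ S ⊆ L, sSup S ∈ L) {G : Set L} (hG : IsBuilding G) {U : L}
    [FiniteDimensional K (U : Submodule K E)] {s : Finset L} (hs : ↑s = maxBelow G U)
    (hdim : finrank K (U : Submodule K E) = ∑ g ∈ s, finrank K (g : Submodule K E)) :
    IsDecompositionIn L (Subtype.val '' maxBelow G U) (U : Submodule K E) := by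
  have hmem : ∀ g, g ∈ s ↔ g ∈ maxBelow G U := fun g => by rw [← hs, Finset.mem_coe]
  have : Fintype (maxBelow G U) := Fintype.subtype s hmem
  have : ∀ g : maxBelow G U, FiniteDimensional K (g : Submodule K E) :=
    fun g => Submodule.finiteDimensional_of_le g.2.2.1
  refine hG.isDecompositionIn hL (iSupIndep_of_finrank_iSup_eq_sum ?_)
  rw [hG.iSup_maxBelow hL, hdim]
  exact Finset.sum_subtype s hmem _

end Dimension

section Arrangement

omit [FiniteDimensional ℂ V] in
lemma finite_Lstar (A : Finset (Submodule ℂ V)) : (Lstar A).Finite := by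
  refine (A.powerset.finite_toSet.image
    fun S : Finset (Submodule ℂ V) => (S.inf id : Submodule ℂ V)ᗮ).subset ?_
  rintro _ ⟨S, hS, rfl⟩
  exact ⟨S, Finset.mem_powerset.2 hS, rfl⟩

lemma sSup_mem_Lstar {A : Finset (Submodule ℂ V)} {F : Set (Submodule ℂ V)} (hF : F ⊆ Lstar A) :
    sSup F ∈ Lstar A := by
  have orthogonal_eq : (sSup F)ᗮ = {a ∈ A | (sSup F)ᗮ ≤ a}.inf id := by
    refine le_antisymm (Finset.le_inf fun a ha => (Finset.mem_filter.1 ha).2) ?_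
    refine (le_iInf₂ fun W hW => ?_).trans_eq (Submodule.sInf_orthogonal F)
    obtain ⟨S, hSA, rfl⟩ := hF hW
    rw [Submodule.orthogonal_orthogonal]
    refine Finset.inf_mono fun a ha => Finset.mem_filter.2 ⟨hSA ha, ?_⟩
    calc (sSup F)ᗮ ≤ (S.inf id)ᗮᗮ := Submodule.orthogonal_le (le_sSup hW)
      _ = S.inf id := Submodule.orthogonal_orthogonal _
      _ ≤ a := Finset.inf_le ha
  refine ⟨{a ∈ A | (sSup F)ᗮ ≤ a}, Finset.filter_subset _ _, ?_⟩
  rw [← orthogonal_eq, Submodule.orthogonal_orthogonal]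

end Arrangement

/-- a combinatorial building set of `L(A)*` whose factors' dimensions add up
correctly is a geometric building set for the arrangement. -/
theorem combinatorial_building_is_geometric (A : Finset (Submodule ℂ V))
    (G : Set ↥(Lstar A)) (hG : IsBuilding G)
    (hdim : ∀ U : ↥(Lstar A), ∀ s : Finset ↥(Lstar A), ↑s = maxBelow G U →
      finrank ℂ (U : Submodule ℂ V) = ∑ g ∈ s, finrank ℂ ((g : Submodule ℂ V))) :
    ∀ U : ↥(Lstar A), IsDecompositionOf A (Subtype.val '' maxBelow G U) U.val := by
  intro U
  have := (finite_Lstar A).to_subtype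
  have hs := (maxBelow G U).toFinite.coe_toFinset
  exact combinatorial_building_is_geometric_general (fun _ => sSup_mem_Lstar) hG hs (hdim U _ hs)

end
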